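/- For each k ∈ ℕ let A_k = {x^k : x ∈ ℕ}. Then A_k is central* in (ℕ,·) if and only if k = 1. -/

import Mathlib

/- `ℕ+` plays the role of the paper's `ℕ = {1,2,3,…}`.  `Ultrafilter ℕ+` is `βℕ`. -/

/-- Product of ultrafilters: `U ∈ umul p q ↔ {x | {y | x*y ∈ U} ∈ q} ∈ p`. -/
def umul (p q : Ultrafilter ℕ+) : Ultrafilter ℕ+ :=
  p.bind fun x => q.map fun y => x * y

/-- A left ideal of `(βℕ,·)`: a nonempty set `L` with `βℕ · L ⊆ L`. -/
def IsLeftIdealMul (L : Set (Ultrafilter ℕ+)) : Prop :=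
  L.Nonempty ∧ ∀ p q, q ∈ L → umul p q ∈ L

/-- A minimal left ideal of `(βℕ,·)`. -/
def IsMinimalLeftIdealMul (L : Set (Ultrafilter ℕ+)) : Prop :=
  IsLeftIdealMul L ∧ ∀ L', IsLeftIdealMul L' → L' ⊆ L → L' = L

/-- `K(βℕ,·)`, the union of all minimal left ideals of `(βℕ,·)`. -/
def KMul : Set (Ultrafilter ℕ+) :=
  {p | ∃ L, IsMinimalLeftIdealMul L ∧ p ∈ L}

/-- `C ⊆ ℕ` is central in `(ℕ,·)`: `C` belongs to some idempotent of `K(βℕ,·)`. -/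
def IsCentralMul (C : Set ℕ+) : Prop :=
  ∃ p : Ultrafilter ℕ+, umul p p = p ∧ p ∈ KMul ∧ C ∈ p

/-- `D` is central* in `(ℕ,·)`: `D` meets every multiplicatively central set. -/
def IsCentralStarMul (D : Set ℕ+) : Prop :=
  ∀ C : Set ℕ+, IsCentralMul C → (D ∩ C).Nonempty

/-!
Let `p` lie in a minimal left ideal of `βℕ`, and let `q` be a nonprincipal ultrafilter containing
the set of primes. Minimality gives `p = r * (q * p)` for some `r`. If the set of `k`-th powers
belonged to `p`, unfolding this product would yield `t` and `x` in `ℕ` and distinct primes `g`, `g'`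
with `t * g * x` and `t * g' * x` both `k`-th powers; comparing their `g`-adic valuations modulo `k`
forces `k = 1`. So for `k ≠ 1` the non-`k`-th-powers are central as soon as `K(βℕ)` contains an
idempotent. It does because `βℕ` is a compact right topological semigroup `S`: Zorn's lemma provides
a minimal element among the compact left ideals `S * a`, this is a minimal left ideal, and compact
semigroups contain idempotents.
-/

section MinimalLeftIdeal

-- Minimal left ideals are encoded as atoms of `SemigroupIdeal S`, whose bottom element is `∅`.

theorem semigroupIdeal_ne_bot_iff {M : Type*} [Mul M] {I : SemigroupIdeal M} :
    I ≠ ⊥ ↔ ∃ a, a ∈ I :=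
  SetLike.coe_injective.ne_iff.symm.trans Set.nonempty_iff_ne_empty.symm

variable {S : Type*} [Semigroup S]

/-- The left ideal `S * a`. In the absence of an identity it need not contain `a`, so it can be
smaller than `SemigroupIdeal.closure {a}`. -/
def leftMultiples (a : S) : SemigroupIdeal S where
  carrier := Set.range (· * a)
  smul_mem' := by
    rintro c _ ⟨b, rfl⟩
    exact ⟨c * b, mul_assoc c b a⟩

theorem mem_leftMultiples {a b : S} : b ∈ leftMultiples a ↔ ∃ c, c * a = b :=
  Iff.rfl

theorem leftMultiples_le {I : SemigroupIdeal S} {a : S} (ha : a ∈ I) : leftMultiples a ≤ I := by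
  rintro _ ⟨b, rfl⟩
  exact I.mul_mem b ha

theorem leftMultiples_ne_bot (a : S) : leftMultiples a ≠ ⊥ :=
  semigroupIdeal_ne_bot_iff.mpr ⟨a * a, a, rfl⟩

theorem leftMultiples_eq_of_isAtom {I : SemigroupIdeal S} (hI : IsAtom I) {a : S} (ha : a ∈ I) :
    leftMultiples a = I :=
  (hI.le_iff_eq (leftMultiples_ne_bot a)).mp (leftMultiples_le ha)

variable [TopologicalSpace S] [CompactSpace S] [T2Space S]

theorem isClosed_leftMultiples {a : S} (ha : Continuous (· * a)) :
    IsClosed (leftMultiples a : Set S) :=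
  (isCompact_range ha).isClosed

theorem exists_leftMultiples_le_of_isChain (hmul : ∀ a : S, Continuous (· * a)) {c : Set S}
    (hc : IsChain (leftMultiples · ≥ leftMultiples ·) c) (hne : c.Nonempty) :
    ∃ b, ∀ a ∈ c, leftMultiples b ≤ leftMultiples a := by
  have : Nonempty c := hne.to_subtype
  obtain ⟨b, hb⟩ : (⋂ a : c, (leftMultiples (a : S) : Set S)).Nonempty :=
    IsCompact.nonempty_iInter_of_directed_nonempty_isCompact_isClosed _
      (hc.directed (r := (· ≥ ·)) (f := leftMultiples))
      (fun _ ↦ semigroupIdeal_ne_bot_iff.mp (leftMultiples_ne_bot _))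
      (fun a ↦ isCompact_range (hmul a)) fun a ↦ isClosed_leftMultiples (hmul a)
  exact ⟨b, fun a ha ↦ leftMultiples_le (Set.mem_iInter.mp hb ⟨a, ha⟩)⟩

theorem exists_isAtom_semigroupIdeal [Nonempty S] (hmul : ∀ a : S, Continuous (· * a)) :
    ∃ I : SemigroupIdeal S, IsAtom I := by
  obtain ⟨a, ha⟩ :
      ∃ a : S, ∀ b, leftMultiples b ≤ leftMultiples a → leftMultiples a ≤ leftMultiples b :=
    exists_maximal_of_nonempty_chains_bounded (r := (leftMultiples · ≥ leftMultiples ·))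
      (fun _ ↦ exists_leftMultiples_le_of_isChain hmul) ge_trans
  refine ⟨leftMultiples a, isAtom_iff_le_of_ge.mpr ⟨leftMultiples_ne_bot a, fun J hJ hJa ↦ ?_⟩⟩
  obtain ⟨b, hb⟩ := semigroupIdeal_ne_bot_iff.mp hJ
  exact (ha b ((leftMultiples_le hb).trans hJa)).trans (leftMultiples_le hb)

theorem exists_isIdempotentElem_mem_of_isAtom (hmul : ∀ a : S, Continuous (· * a))
    {I : SemigroupIdeal S} (hI : IsAtom I) : ∃ e ∈ I, IsIdempotentElem e := by
  obtain ⟨a, ha⟩ := semigroupIdeal_ne_bot_iff.mp hI.ne_bot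
  have hclosed : IsClosed (I : Set S) :=
    leftMultiples_eq_of_isAtom hI ha ▸ isClosed_leftMultiples (hmul a)
  exact exists_idempotent_in_compact_subsemigroup hmul I ⟨a, ha⟩ hclosed.isCompact
    fun b _ c hc ↦ I.mul_mem b hc

end MinimalLeftIdeal

attribute [local instance] Ultrafilter.mul Ultrafilter.semigroup

theorem notMem_ultrafilter_of_isAtom {M : Type*} [Semigroup M] {A G : Set M} (hG : G.Infinite)
    (hA : ∀ t x, {g ∈ G | t * g * x ∈ A}.Subsingleton) {I : SemigroupIdeal (Ultrafilter M)}
    (hI : IsAtom I) {p : Ultrafilter M} (hp : p ∈ I) : A ∉ p := by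
  intro hAp
  have := hG.cofinite_inf_principal_neBot
  obtain ⟨q, hq⟩ := Ultrafilter.exists_le (Filter.cofinite ⊓ Filter.principal G)
  have hqG : ∀ᶠ g in (q : Filter M), g ∈ G := Filter.le_principal_iff.mp (hq.trans inf_le_right)
  obtain ⟨r, hr⟩ : ∃ r, r * (q * p) = p := by
    rwa [← mem_leftMultiples, leftMultiples_eq_of_isAtom hI (I.mul_mem q hp)]
  have hrqp : ∀ᶠ z in (r * (q * p) : Ultrafilter M), z ∈ A := by rwa [hr]
  obtain ⟨t, ht⟩ := ((Ultrafilter.eventually_mul _ _ _).mp hrqp).exists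
  have htq : ∀ᶠ g in (q : Filter M), g ∈ G ∧ ∀ᶠ x in (p : Filter M), t * g * x ∈ A := by
    simpa only [mul_assoc] using hqG.and ((Ultrafilter.eventually_mul _ _ _).mp ht)
  obtain ⟨g, hgG, hg⟩ := htq.exists
  have hne : ∀ᶠ g' in (q : Filter M), g' ≠ g :=
    (hq.trans inf_le_left) (Set.finite_singleton g).compl_mem_cofinite
  obtain ⟨g', ⟨hgG', hg'⟩, hgg'⟩ := (htq.and hne).exists
  obtain ⟨x, hx, hx'⟩ := (hg.and hg').exists
  exact hgg' (hA t x ⟨hgG', hx'⟩ ⟨hgG, hx⟩)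

section PerfectPowers

variable {α : Type*} [CommMonoidWithZero α] [IsCancelMulZero α] {p q n a b : α} {k : ℕ}

theorem dvd_multiplicity_pow (hp : Prime p) (hak : FiniteMultiplicity p (a ^ k)) :
    k ∣ multiplicity p (a ^ k) := by
  obtain rfl | hk := eq_or_ne k 0
  · simp [multiplicity_eq_zero.mpr hp.not_dvd_one]
  · have ha : FiniteMultiplicity p a := by
      rw [← mul_pow_sub_one hk] at hak
      exact hak.mul_left
    rw [ha.multiplicity_pow hp]
    exact dvd_mul_right k _

theorem dvd_of_prime_mul_eq_pow (hk : k ≠ 1) (hp : Prime p) (hn : FiniteMultiplicity p n)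
    (ha : p * n = a ^ k) (hb : q * n = b ^ k) : p ∣ q := by
  by_contra hpq
  have hpp : FiniteMultiplicity p p :=
    ⟨1, by simpa using (pow_dvd_pow_iff hp.ne_zero hp.not_isUnit (m := 1) (n := 2)).not⟩
  have hpn : FiniteMultiplicity p (p * n) := hp.finiteMultiplicity_mul hpp hn
  have hqn : FiniteMultiplicity p (q * n) := hp.finiteMultiplicity_mul ⟨0, by simpa⟩ hn
  have hdvd_succ : k ∣ 1 + multiplicity p n := by
    rw [← multiplicity_self (a := p), ← multiplicity_mul hp hpn, ha]
    exact dvd_multiplicity_pow hp (ha ▸ hpn)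
  have hdvd : k ∣ multiplicity p n := by
    rw [← zero_add (multiplicity p n), ← multiplicity_eq_zero.mpr hpq, ← multiplicity_mul hp hqn,
      hb]
    exact dvd_multiplicity_pow hp (hb ▸ hqn)
  exact hk (Nat.dvd_one.mp ((Nat.dvd_add_left hdvd).mp hdvd_succ))

theorem infinite_setOf_pnat_prime : {p : ℕ+ | p.Prime}.Infinite :=
  Nat.infinite_setOfPred_prime.preimage (f := ((↑) : ℕ+ → ℕ)) fun p hp ↦ ⟨⟨p, hp.pos⟩, rfl⟩

theorem subsingleton_setOf_prime_mul_eq_pow (hk : k ≠ 1) (t x : ℕ+) :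
    {p ∈ {p : ℕ+ | p.Prime} | t * p * x ∈ {z | ∃ y, z = y ^ k}}.Subsingleton := by
  rintro p ⟨hp, a, ha⟩ q ⟨hq, b, hb⟩
  have hn : FiniteMultiplicity (p : ℕ) (t * x : ℕ) :=
    Nat.finiteMultiplicity_iff.mpr ⟨Nat.Prime.ne_one hp, (t * x).pos⟩
  have hpa : (p * (t * x) : ℕ) = a ^ k := by
    rw [← PNat.pow_coe, ← ha, PNat.mul_coe, PNat.mul_coe]
    ring
  have hqb : (q * (t * x) : ℕ) = b ^ k := by
    rw [← PNat.pow_coe, ← hb, PNat.mul_coe, PNat.mul_coe]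
    ring
  have hpq : (p : ℕ) ∣ q := dvd_of_prime_mul_eq_pow hk (Nat.Prime.prime hp) hn hpa hqb
  exact PNat.coe_injective ((Nat.prime_dvd_prime_iff_eq hp hq).mp hpq)

end PerfectPowers

section BetaNat

theorem umul_eq_mul (p q : Ultrafilter ℕ+) : umul p q = p * q :=
  rfl

/-- A left ideal of `(βℕ,·)` as a `SemigroupIdeal`, the bundled notion, which also admits `∅`. -/
def IsLeftIdealMul.toSemigroupIdeal {L : Set (Ultrafilter ℕ+)} (hL : IsLeftIdealMul L) :
    SemigroupIdeal (Ultrafilter ℕ+) where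
  carrier := L
  smul_mem' p q hq := by simpa only [smul_eq_mul, ← umul_eq_mul] using hL.2 p q hq

theorem isLeftIdealMul_coe {I : SemigroupIdeal (Ultrafilter ℕ+)} :
    IsLeftIdealMul (I : Set (Ultrafilter ℕ+)) ↔ I ≠ ⊥ :=
  ⟨fun h ↦ semigroupIdeal_ne_bot_iff.mpr h.1,
    fun h ↦ ⟨semigroupIdeal_ne_bot_iff.mp h, fun p q hq ↦ umul_eq_mul p q ▸ I.mul_mem p hq⟩⟩

theorem isMinimalLeftIdealMul_coe {I : SemigroupIdeal (Ultrafilter ℕ+)} :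
    IsMinimalLeftIdealMul (I : Set (Ultrafilter ℕ+)) ↔ IsAtom I := by
  rw [isAtom_iff_le_of_ge, IsMinimalLeftIdealMul, isLeftIdealMul_coe]
  refine and_congr_right fun _ ↦ ⟨fun h J hJ hJI ↦ ?_, fun h L hL hLI ↦ ?_⟩
  · exact (h J (isLeftIdealMul_coe.mpr hJ) hJI).ge
  · exact hLI.antisymm (h hL.toSemigroupIdeal (isLeftIdealMul_coe.mp hL) hLI)

theorem mem_KMul_iff {p : Ultrafilter ℕ+} :
    p ∈ KMul ↔ ∃ I : SemigroupIdeal (Ultrafilter ℕ+), IsAtom I ∧ p ∈ I := by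
  constructor
  · rintro ⟨L, hL, hp⟩
    exact ⟨hL.1.toSemigroupIdeal, isMinimalLeftIdealMul_coe.mp hL, hp⟩
  · rintro ⟨I, hI, hp⟩
    exact ⟨I, isMinimalLeftIdealMul_coe.mpr hI, hp⟩

theorem exists_idempotent_mem_KMul : ∃ p ∈ KMul, umul p p = p := by
  obtain ⟨I, hI⟩ := exists_isAtom_semigroupIdeal (Ultrafilter.continuous_mul_left (M := ℕ+))
  obtain ⟨p, hp, hpp⟩ := exists_isIdempotentElem_mem_of_isAtom Ultrafilter.continuous_mul_left hI
  exact ⟨p, mem_KMul_iff.mpr ⟨I, hI, hp⟩, (umul_eq_mul p p).trans hpp⟩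

theorem setOf_pow_notMem_of_mem_KMul {k : ℕ} (hk : k ≠ 1) {p : Ultrafilter ℕ+} (hp : p ∈ KMul) :
    {z : ℕ+ | ∃ x : ℕ+, z = x ^ k} ∉ p := by
  obtain ⟨I, hI, hpI⟩ := mem_KMul_iff.mp hp
  exact notMem_ultrafilter_of_isAtom infinite_setOf_pnat_prime
    (subsingleton_setOf_prime_mul_eq_pow hk) hI hpI

theorem isCentralStarMul_iff {D : Set ℕ+} :
    IsCentralStarMul D ↔ ∀ p ∈ KMul, umul p p = p → D ∈ p := by
  constructor
  · intro h p hp hpp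
    by_contra hD
    obtain ⟨z, hz, hz'⟩ := h Dᶜ ⟨p, hpp, hp, Ultrafilter.compl_mem_iff_notMem.mpr hD⟩
    exact hz' hz
  · rintro h C ⟨p, hpp, hp, hC⟩
    exact Ultrafilter.nonempty_of_mem (Filter.inter_mem (h p hp hpp) hC)

end BetaNat

/-- Lemma 3.4: for `k ∈ ℕ`, the set `A_k = {x^k : x ∈ ℕ}` is
central* in `(ℕ,·)` if and only if `k = 1`. -/
theorem stmt_9 (k : ℕ) (hk : 0 < k) :
    IsCentralStarMul {z : ℕ+ | ∃ x : ℕ+, z = x ^ k} ↔ k = 1 := by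
  rw [isCentralStarMul_iff]
  constructor
  · intro h
    by_contra hk1
    obtain ⟨p, hp, hpp⟩ := exists_idempotent_mem_KMul
    exact setOf_pow_notMem_of_mem_KMul hk1 hp (h p hp hpp)
  · rintro rfl p - -
    exact Filter.Eventually.of_forall fun z ↦ ⟨z, (pow_one z).symm⟩
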